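/- The correspondence property S₁ ≜ { t | ∀ m d x, m·[Write d x] ≤ t → ∃ m', m'·[Read, Ret x] ≤ m } is a safety property, but S₁ does not belong to Closed_{≺_P}; consequently S₁ ∉ Z_P, and Z_P is a proper subclass of the class of safety properties. -/

import Mathlib

/-!
A violation of `S₁` is exhibited by a single finite prefix `m·[Write d x]` whose `m` has no
`Read, Ret x`; every extension of that prefix is a violation as well, so `S₁` is safety
(`S1_safety`). It is not closed under `≺_P`: the trace `[UndefP]` satisfies `S₁` vacuously, and
since the empty prefix is a prefix of everything, `[UndefP] ≺_P [Write v v]`, which violates `S₁`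
(`S1_not_closedP`). Hence `S₁` separates `Z_P` from the safety properties.
-/

/-!
STATEMENT 8: S₁ is a safety property but is not in Closed_{≺_P}; hence
S₁ ∉ Z_P and Z_P is a proper subclass of the safety properties.
-/

namespace Stmt8

/-- A trace is either a finite list of events or an infinite sequence of events. -/
abbrev Trace (E : Type) := List E ⊕ (ℕ → E)

/-- `prefixOf m t`: the finite trace prefix `m` is a prefix of the trace `t`. -/
def prefixOf {E : Type} (m : List E) : Trace E → Prop
  | .inl l => m <+: l
  | .inr f => ∀ i (h : i < m.length), m.get ⟨i, h⟩ = f i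

/-- Well-formedness of a trace wrt the event `u = UndefP`: `u` occurs at most
once, and only as the last event (so never in an infinite trace). -/
def wf {E : Type} (u : E) : Trace E → Prop
  | .inl l => ∀ i (h : i < l.length), l.get ⟨i, h⟩ = u → i + 1 = l.length
  | .inr f => ∀ n, f n ≠ u

/-- The type of (well-formed) traces: by assumption every trace contains
`UndefP` at most once and only as its last event. -/
abbrev WTrace (E : Type) (u : E) := { t : Trace E // wf u t }

/-- `m` is a prefix of the (well-formed) trace `t`. -/
def wPrefix {E : Type} {u : E} (m : List E) (t : WTrace E u) : Prop :=
  prefixOf m t.1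

/-- `t ≺_P t'` (both traces): `t = m'·[UndefP]` for some finite `m' ≤ t'`. -/
def precP {E : Type} {u : E} (t t' : WTrace E u) : Prop :=
  ∃ m' : List E, t.1 = Sum.inl (m' ++ [u]) ∧ wPrefix m' t'

/-- `t ≺_P m` (trace vs finite prefix): `t = m'·[UndefP]` for some `m' ≤ m`. -/
def precPList {E : Type} {u : E} (t : WTrace E u) (m : List E) : Prop :=
  ∃ m' : List E, t.1 = Sum.inl (m' ++ [u]) ∧ m' <+: m

/-- `π` is a safety property. -/
def Safety {E : Type} {u : E} (π : Set (WTrace E u)) : Prop :=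
  ∀ t, t ∉ π → ∃ m : List E, wPrefix m t ∧ ∀ t', wPrefix m t' → t' ∉ π

/-- `π` is closed under extension of traces with undefined behavior in `P`. -/
def ClosedP {E : Type} {u : E} (π : Set (WTrace E u)) : Prop :=
  ∀ t ∈ π, ∀ t', precP t t' → t' ∈ π

/-- `Z_P ≜ Safety ∩ Closed_{≺_P}`. -/
def ZP {E : Type} {u : E} (π : Set (WTrace E u)) : Prop :=
  Safety π ∧ ClosedP π

/-- The correspondence property
`S₁ ≜ { t | ∀ m d x, m·[Write d x] ≤ t → ∃ m_1, m_1·[Read, Ret x] ≤ m }`. -/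
def S1 {E Val : Type} {u : E} (read : E) (ret : Val → E) (write : Val → Val → E) :
    Set (WTrace E u) :=
  { t | ∀ (m : List E) (d x : Val), wPrefix (m ++ [write d x]) t →
        ∃ m_1 : List E, (m_1 ++ [read, ret x]) <+: m }

/-- A violation of `S₁` is witnessed by a prefix `m·[Write d x]` alone, so any trace extending
that prefix violates `S₁` too. -/
theorem S1_safety {E Val : Type} {u : E} (read : E) (ret : Val → E) (write : Val → Val → E) :
    Safety (S1 (u := u) read ret write) := by
  intro t ht
  simp only [S1, Set.mem_ofPred_eq, not_forall] at ht
  obtain ⟨m, d, x, hm, hno⟩ := ht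
  exact ⟨m ++ [write d x], hm, fun t' ht' hS => hno (hS m d x ht')⟩

/-- `[UndefP] ≺_P [Write v v]`; the former contains no write, whereas `[Write v v]`
contains one with no preceding read. -/
theorem S1_not_closedP {E Val : Type} [Nonempty Val] {u : E}
    (read : E) (ret : Val → E) (write : Val → Val → E)
    (h_write_undef : ∀ d x, write d x ≠ u) :
    ¬ ClosedP (S1 (u := u) read ret write) := by
  intro hC
  obtain ⟨v⟩ := ‹Nonempty Val›
  have hwf : ∀ e : E, wf u (Sum.inl [e]) := by
    intro e i hi _
    simp only [List.length_singleton] at hi ⊢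
    omega
  have hmem : (⟨Sum.inl [u], hwf u⟩ : WTrace E u) ∈ S1 (u := u) read ret write := by
    intro m d x hp
    have hp' : m ++ [write d x] <+: [u] := hp
    have hw : write d x ∈ [u] := hp'.subset (by simp)
    exact absurd (List.mem_singleton.mp hw) (h_write_undef d x)
  have hprec : precP (⟨Sum.inl [u], hwf u⟩ : WTrace E u) ⟨Sum.inl [write v v], hwf _⟩ :=
    ⟨[], rfl, List.nil_prefix⟩
  obtain ⟨m₁, hm₁⟩ := hC _ hmem _ hprec [] v v (List.prefix_refl _)
  simp at hm₁

theorem S1_safety_not_closedP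
    {E Val : Type} [Nonempty Val] (u : E)
    (read : E) (ret : Val → E) (write : Val → Val → E)
    -- the events Read, Ret x, Write d x and UndefP are pairwise distinct
    (h_read_undef : read ≠ u)
    (h_ret_undef : ∀ x, ret x ≠ u)
    (h_write_undef : ∀ d x, write d x ≠ u)
    (h_read_ret : ∀ x, read ≠ ret x)
    (h_read_write : ∀ d x, read ≠ write d x)
    (h_ret_write : ∀ x d y, ret x ≠ write d y)
    (h_ret_inj : Function.Injective ret)
    (h_write_inj : ∀ d x d_1 x_1, write d x = write d_1 x_1 → d = d_1 ∧ x = x_1) :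
    Safety (S1 (u := u) read ret write) ∧
    ¬ ClosedP (S1 (u := u) read ret write) ∧
    ¬ ZP (S1 (u := u) read ret write) ∧
    { π : Set (WTrace E u) | ZP π } ⊂ { π : Set (WTrace E u) | Safety π } := by
  have hS := S1_safety (u := u) read ret write
  have hC := S1_not_closedP (u := u) read ret write h_write_undef
  exact ⟨hS, hC, fun h => hC h.2, fun _ h => h.1, fun h => hC (h hS).2⟩

end Stmt8
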